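/- arXiv:2012.08766 — 2 statements merged into one kernel-verified Lean document; each statement's English description precedes it below -/
import Mathlib

section
/- Let 1<p<∞, μ>0, η>0 and w ∈ P(ℝ₊). Then for every u ∈ C_c^1((0,η]) one has ∫_0^η |u'(t)|^p W_p(t) dt + Λ_p^{1/p'} μ^{1-p} |u(η)|^p ≥ Λ_p ∫_0^η |u(t)|^p W_p(t) / F_η(t)^p dt. -/
open MeasureTheory Set

/-- `f_η(t) = μ + ∫_t^η w(s)⁻¹ ds`  (case `w ∈ P(ℝ₊)`). -/
noncomputable def fP (w : ℝ → ℝ) (μ η t : ℝ) : ℝ := μ + ∫ s in t..η, (w s)⁻¹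

/-- `F_η(t) = w(t) f_η(t)`. -/
noncomputable def FP (w : ℝ → ℝ) (μ η t : ℝ) : ℝ := w t * fP w μ η t

/-- `W_p(t) = w(t)^(p-1)`. -/
noncomputable def Wp (w : ℝ → ℝ) (p t : ℝ) : ℝ := w t ^ (p - 1)

/-! Since `f' = -1/w`, the quantity `Ψ = c^(p-1) |u|^p f^(1-p)` with `c = 1 - 1/p` has a
derivative consisting of the cross term `p c^(p-1) |u|^(p-2) u u' f^(1-p)` and the positive term
`p c^p |u|^p f^(-p) / w`. Young's inequality bounds the cross term below by
`-|u'|^p w^(p-1) - (p - 1) c^p |u|^p f^(-p) / w`, so `Ψ'` is at least the difference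
`c^p |u|^p f^(-p) / w - |u'|^p w^(p-1)` of the Hardy integrands. Integrate over `[a, η]`: the
boundary term at `η` is `c^(p-1) μ^(1-p) |u η|^p`, while the one at `a` has a favourable sign and
can be dropped before letting `a → 0⁺`. -/

section Pointwise

lemma one_sub_one_div_pos {p : ℝ} (hp : 1 < p) : 0 < 1 - 1 / p :=
  sub_pos.2 <| (div_lt_one (by linarith)).2 hp

lemma sub_one_mul_one_sub_one_div_rpow {p : ℝ} (hp : 1 < p) :
    (p - 1) * (1 - 1 / p) ^ (p - 1) = p * (1 - 1 / p) ^ p := by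
  have hc := (one_sub_one_div_pos hp).ne'
  have hpc : p * (1 - 1 / p) = p - 1 := by field_simp
  rw [Real.rpow_sub_one hc, ← hpc, mul_assoc, mul_div_cancel₀ _ hc]

lemma mul_mul_rpow_sub_one_le {p a b : ℝ} (hp : 1 < p) (ha : 0 ≤ a) (hb : 0 ≤ b) :
    p * (a * b ^ (p - 1)) ≤ a ^ p + (p - 1) * b ^ p := by
  have : 0 < p := by linarith
  have hp1 : p - 1 ≠ 0 := by linarith
  have young := Real.young_inequality_of_nonneg ha (Real.rpow_nonneg hb (p - 1))
    (Real.HolderConjugate.conjExponent hp)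
  rw [Real.conjExponent, ← Real.rpow_mul hb, mul_div_cancel₀ _ hp1] at young
  calc p * (a * b ^ (p - 1)) ≤ p * (a ^ p / p + b ^ p / (p / (p - 1))) := by gcongr
    _ = a ^ p + (p - 1) * b ^ p := by field_simp

lemma mul_mul_rpow_sub_one_le_weighted {p a b w : ℝ} (hp : 1 < p) (ha : 0 ≤ a) (hb : 0 ≤ b)
    (hw : 0 < w) :
    p * (a * b ^ (p - 1)) ≤ a ^ p * w ^ (p - 1) + (p - 1) * (b ^ p * w⁻¹) :=
  calc p * (a * b ^ (p - 1)) = p * (a * w * b ^ (p - 1)) * w⁻¹ := by field_simp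
    _ ≤ ((a * w) ^ p + (p - 1) * b ^ p) * w⁻¹ := by
      gcongr
      exact mul_mul_rpow_sub_one_le hp (by positivity) hb
    _ = a ^ p * w ^ (p - 1) + (p - 1) * (b ^ p * w⁻¹) := by
      rw [Real.mul_rpow ha hw.le, Real.rpow_sub_one hw.ne']
      ring

variable {E : Type*} [NormedAddCommGroup E] [InnerProductSpace ℝ E]

lemma neg_norm_rpow_mul_norm_le_inner {p : ℝ} (hp : 1 < p) (x y : E) :
    -(‖x‖ ^ (p - 1) * ‖y‖) ≤ ‖x‖ ^ (p - 2) * inner ℝ x y := by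
  have hpow : ‖x‖ ^ (p - 2) * ‖x‖ = ‖x‖ ^ (p - 1) := by
    rw [← Real.rpow_add_one' (norm_nonneg x) (by linarith)]
    ring_nf
  rw [← hpow, mul_assoc, ← mul_neg]
  gcongr
  exact neg_le_of_abs_le (abs_real_inner_le_norm x y)

lemma hardy_integrand_sub_le {p w f : ℝ} (hp : 1 < p) (hw : 0 < w) (hf : 0 < f) (x y : E) :
    (1 - 1 / p) ^ p * (‖x‖ ^ p * w ^ (p - 1) / (w * f) ^ p) - ‖y‖ ^ p * w ^ (p - 1)
      ≤ (1 - 1 / p) ^ (p - 1) * (p * ‖x‖ ^ (p - 2) * inner ℝ x y * f ^ (1 - p)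
        + ‖x‖ ^ p * (-w⁻¹ * (1 - p) * f ^ (1 - p - 1))) := by
  have hc := one_sub_one_div_pos hp
  have hconst := sub_one_mul_one_sub_one_div_rpow hp
  set c := 1 - 1 / p
  set b := c * ‖x‖ * f⁻¹ with hb_def
  have hb : 0 ≤ b := by positivity
  have hb_rpow (q : ℝ) : b ^ q = c ^ q * ‖x‖ ^ q * f ^ (-q) := by
    rw [hb_def, Real.mul_rpow (by positivity) (by positivity), Real.mul_rpow hc.le (norm_nonneg x),
      Real.inv_rpow hf.le, Real.rpow_neg hf.le]
  have hleft : c ^ p * (‖x‖ ^ p * w ^ (p - 1) / (w * f) ^ p) = b ^ p * w⁻¹ := by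
    rw [hb_rpow, Real.rpow_sub_one hw.ne', Real.mul_rpow hw.le hf.le, Real.rpow_neg hf.le]
    field_simp
  have hcross : -(p * (‖y‖ * b ^ (p - 1)))
      ≤ c ^ (p - 1) * (p * ‖x‖ ^ (p - 2) * inner ℝ x y * f ^ (1 - p)) :=
    calc -(p * (‖y‖ * b ^ (p - 1)))
        = p * c ^ (p - 1) * f ^ (1 - p) * -(‖x‖ ^ (p - 1) * ‖y‖) := by
          rw [hb_rpow, neg_sub]
          ring
      _ ≤ p * c ^ (p - 1) * f ^ (1 - p) * (‖x‖ ^ (p - 2) * inner ℝ x y) := by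
          gcongr
          exact neg_norm_rpow_mul_norm_le_inner hp x y
      _ = c ^ (p - 1) * (p * ‖x‖ ^ (p - 2) * inner ℝ x y * f ^ (1 - p)) := by ring
  have hpotential : c ^ (p - 1) * (‖x‖ ^ p * (-w⁻¹ * (1 - p) * f ^ (1 - p - 1)))
      = p * (b ^ p * w⁻¹) := by
    rw [hb_rpow, show 1 - p - 1 = -p by ring]
    linear_combination ‖x‖ ^ p * w⁻¹ * f ^ (-p) * hconst
  have young := mul_mul_rpow_sub_one_le_weighted hp (norm_nonneg y) hb hw
  rw [hleft, mul_add, hpotential]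
  linarith

end Pointwise

section Interval

variable {E : Type*} [NormedAddCommGroup E] {p a b : ℝ} {w f : ℝ → ℝ} {u u' : ℝ → E}

/-- The quantity `Ψ = (1 - 1/p)^(p-1) ‖u‖^p f^(1-p)`, whose derivative dominates the difference of
the two integrands of Hardy's inequality when `f' = -1/w`. The constant is included so that `Ψ` at
the right endpoint is the boundary term of the inequality. -/
noncomputable def hardyFlux (p : ℝ) (f : ℝ → ℝ) (u : ℝ → E) (t : ℝ) : ℝ :=
  (1 - 1 / p) ^ (p - 1) * (‖u t‖ ^ p * f t ^ (1 - p))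

lemma hardyFlux_nonneg (hp : 1 < p) {t : ℝ} (hf : 0 ≤ f t) : 0 ≤ hardyFlux p f u t := by
  have hc := one_sub_one_div_pos hp
  unfold hardyFlux
  positivity

lemma continuousOn_hardyFlux {s : Set ℝ} (hp : 0 ≤ p) (hu : ContinuousOn u s)
    (hf : ContinuousOn f s) (hf0 : ∀ t ∈ s, f t ≠ 0) : ContinuousOn (hardyFlux p f u) s :=
  ((hu.norm.rpow_const fun _ _ => .inr hp).mul
    (hf.rpow_const fun t ht => .inl (hf0 t ht))).const_mul _

lemma continuousOn_hardy_integrand {s : Set ℝ} (hp : 0 ≤ p) (hu : ContinuousOn u s)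
    (hw : ContinuousOn w s) (hw0 : ∀ t ∈ s, 0 < w t) (hf : ContinuousOn f s)
    (hf0 : ∀ t ∈ s, 0 < f t) :
    ContinuousOn (fun t => ‖u t‖ ^ p * w t ^ (p - 1) / (w t * f t) ^ p) s :=
  ((hu.norm.rpow_const fun _ _ => .inr hp).mul
    (hw.rpow_const fun t ht => .inl (hw0 t ht).ne')).div
    ((hw.mul hf).rpow_const fun _ _ => .inr hp)
    fun t ht => (Real.rpow_pos_of_pos (mul_pos (hw0 t ht) (hf0 t ht)) p).ne'

variable [InnerProductSpace ℝ E]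

lemma hasDerivAt_hardyFlux {t f' : ℝ} {v : E} (hp : 1 < p) (hu : HasDerivAt u v t)
    (hf : HasDerivAt f f' t) (hf0 : f t ≠ 0) :
    HasDerivAt (hardyFlux p f u)
      ((1 - 1 / p) ^ (p - 1) * (p * ‖u t‖ ^ (p - 2) * inner ℝ (u t) v * f t ^ (1 - p)
        + ‖u t‖ ^ p * (f' * (1 - p) * f t ^ (1 - p - 1)))) t := by
  have hnorm : HasDerivAt (fun s => ‖u s‖ ^ p) (p * ‖u t‖ ^ (p - 2) * inner ℝ (u t) v) t :=
    (hasFDerivAt_norm_rpow (u t) hp).comp_hasDerivAt t hu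
  exact (hnorm.mul (hf.rpow_const (.inl hf0))).const_mul _

theorem integral_hardy_le_of_hasDerivAt (hp : 1 < p) (hab : a ≤ b)
    (hw : ContinuousOn w (Icc a b)) (hw0 : ∀ t ∈ Icc a b, 0 < w t)
    (hf : ContinuousOn f (Icc a b)) (hf0 : ∀ t ∈ Icc a b, 0 < f t)
    (hf' : ∀ t ∈ Ioo a b, HasDerivAt f (-(w t)⁻¹) t)
    (hu : ContinuousOn u (Icc a b)) (hu' : ∀ t ∈ Ioo a b, HasDerivAt u (u' t) t)
    (hint : IntervalIntegrable (fun t => ‖u' t‖ ^ p * w t ^ (p - 1)) volume a b) :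
    (1 - 1 / p) ^ p * ∫ t in a..b, ‖u t‖ ^ p * w t ^ (p - 1) / (w t * f t) ^ p
      ≤ (∫ t in a..b, ‖u' t‖ ^ p * w t ^ (p - 1)) + hardyFlux p f u b := by
  have hp0 : 0 ≤ p := by linarith
  have hint_hardy := ((continuousOn_hardy_integrand hp0 hu hw hw0 hf hf0).intervalIntegrable_of_Icc
    (μ := volume) hab).const_mul ((1 - 1 / p) ^ p)
  have hflux := intervalIntegral.integral_le_sub_of_hasDeriv_right_of_le hab
    (continuousOn_hardyFlux hp0 hu hf fun t ht => (hf0 t ht).ne')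
    (fun t ht => (hasDerivAt_hardyFlux hp (hu' t ht) (hf' t ht)
      (hf0 t (Ioo_subset_Icc_self ht)).ne').hasDerivWithinAt)
    ((intervalIntegrable_iff_integrableOn_Icc_of_le hab).1 (hint_hardy.sub hint))
    (fun t ht => hardy_integrand_sub_le hp (hw0 t (Ioo_subset_Icc_self ht))
      (hf0 t (Ioo_subset_Icc_self ht)) (u t) (u' t))
  rw [intervalIntegral.integral_sub hint_hardy hint, intervalIntegral.integral_const_mul] at hflux
  linarith [hardyFlux_nonneg (u := u) hp (hf0 a (left_mem_Icc.2 hab)).le]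

end Interval

section ImproperIntegral

variable {a b : ℝ} {g : ℝ → ℝ}

lemma intervalIntegrable_of_forall_integral_le {C : ℝ} (hab : a < b)
    (hg : ∀ t ∈ Ioc a b, 0 ≤ g t) (hint : ∀ x ∈ Ioc a b, IntervalIntegrable g volume x b)
    (hC : ∀ x ∈ Ioc a b, ∫ t in x..b, g t ≤ C) : IntervalIntegrable g volume a b := by
  obtain ⟨x, -, hx, hx_lim⟩ := exists_seq_strictAnti_tendsto' hab
  have hx' (n : ℕ) : x n ∈ Ioc a b := Ioo_subset_Ioc_self (hx n)
  rw [intervalIntegrable_iff_integrableOn_Ioc_of_le hab.le]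
  refine integrableOn_Ioc_of_intervalIntegral_norm_bounded_left (I := C)
    (fun n => (intervalIntegrable_iff_integrableOn_Ioc_of_le (hx' n).2).1 (hint _ (hx' n)))
    hx_lim (.of_forall fun n => ?_)
  have hnorm : ∫ t in Ioc (x n) b, ‖g t‖ = ∫ t in Ioc (x n) b, g t :=
    setIntegral_congr_fun measurableSet_Ioc fun t ht =>
      Real.norm_of_nonneg (hg t ⟨(hx' n).1.trans ht.1, ht.2⟩)
  rw [hnorm, ← intervalIntegral.integral_of_le (hx' n).2]
  exact hC _ (hx' n)

lemma integral_le_of_forall_integral_le {C : ℝ} (hab : a < b)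
    (hint : IntervalIntegrable g volume a b) (hC : ∀ x ∈ Ioc a b, ∫ t in x..b, g t ≤ C) :
    ∫ t in a..b, g t ≤ C := by
  have hcont : ContinuousOn (fun x => ∫ t in x..b, g t) (Icc a b) := by
    rw [← uIcc_of_le hab.le]
    exact intervalIntegral.continuousOn_primitive_interval_left
      (by rwa [uIcc_of_le hab.le, ← intervalIntegrable_iff_integrableOn_Icc_of_le hab.le])
  have hlim := ((hcont a (left_mem_Icc.2 hab.le)).mono Ioc_subset_Icc_self).tendsto
  have : (nhdsWithin a (Ioc a b)).NeBot := left_nhdsWithin_Ioc_neBot hab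
  exact le_of_tendsto hlim (eventually_mem_nhdsWithin.mono hC)

end ImproperIntegral

section VanishingNearEndpoint

open Filter Topology

variable {E : Type*} [NormedAddCommGroup E] {a b : ℝ}

lemma intervalIntegrable_of_continuousOn_of_eventually_eq_zero {g : ℝ → E} (hab : a < b)
    (hg : ContinuousOn g (Ioc a b)) (hg0 : ∀ᶠ t in 𝓝[>] a, g t = 0) :
    IntervalIntegrable g volume a b := by
  obtain ⟨c, hac, hc⟩ := mem_nhdsGT_iff_exists_Ioo_subset.1 hg0
  have had : a < min c b := lt_min hac hab
  have hzero : IntervalIntegrable g volume a (min c b) :=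
    (intervalIntegrable_const (c := (0 : E))).congr_uIoo fun t ht => by
      rw [uIoo_of_le had.le] at ht
      exact (hc ⟨ht.1, ht.2.trans_le (min_le_left c b)⟩).symm
  exact hzero.trans <| (hg.mono fun t ht => ⟨had.trans_le ht.1, ht.2⟩).intervalIntegrable_of_Icc
    (min_le_right c b)

variable [NormedSpace ℝ E] {u u' : ℝ → E}

lemma eventually_nhdsGT_deriv_eq_zero (hab : a < b)
    (hu : ∀ t ∈ Ioc a b, HasDerivWithinAt u (u' t) (Ioc a b) t)
    (hu0 : ∀ᶠ t in 𝓝[>] a, u t = 0) : ∀ᶠ t in 𝓝[>] a, u' t = 0 := by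
  filter_upwards [eventually_eventually_nhdsWithin.2 hu0, Ioo_mem_nhdsGT hab] with t hzero ht
  rw [isOpen_Ioi.nhdsWithin_eq ht.1] at hzero
  have hderiv := (hu t (Ioo_subset_Ioc_self ht)).hasDerivAt (Ioc_mem_nhds ht.1 ht.2)
  exact hderiv.unique ((hasDerivAt_const t 0).congr_of_eventuallyEq hzero)

lemma intervalIntegrable_norm_deriv_rpow_mul {p : ℝ} {v : ℝ → ℝ} (hp : 0 < p) (hab : a < b)
    (hv : ContinuousOn v (Ioc a b)) (hu : ∀ t ∈ Ioc a b, HasDerivWithinAt u (u' t) (Ioc a b) t)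
    (hu' : ContinuousOn u' (Ioc a b)) (hu0 : ∀ᶠ t in 𝓝[>] a, u t = 0) :
    IntervalIntegrable (fun t => ‖u' t‖ ^ p * v t) volume a b := by
  refine intervalIntegrable_of_continuousOn_of_eventually_eq_zero hab
    ((hu'.norm.rpow_const fun _ _ => .inr hp.le).mul hv) ?_
  filter_upwards [eventually_nhdsGT_deriv_eq_zero hab hu hu0] with t ht
  rw [ht, norm_zero, Real.zero_rpow hp.ne', zero_mul]

end VanishingNearEndpoint

section Weight

variable {w : ℝ → ℝ} {p μ η a t : ℝ}

lemma fP_self : fP w μ η η = μ := by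
  rw [fP, intervalIntegral.integral_same, add_zero]

lemma fP_pos (hμ : 0 < μ) (htη : t ≤ η) (hw0 : ∀ s ∈ Icc t η, 0 < w s) : 0 < fP w μ η t :=
  add_pos_of_pos_of_nonneg hμ <|
    intervalIntegral.integral_nonneg htη fun s hs => (inv_pos.2 (hw0 s hs)).le

lemma FP_pos (hμ : 0 < μ) (htη : t ≤ η) (hw0 : ∀ s ∈ Icc t η, 0 < w s) : 0 < FP w μ η t :=
  mul_pos (hw0 t (left_mem_Icc.2 htη)) (fP_pos hμ htη hw0)

lemma Wp_pos (hw0 : 0 < w t) : 0 < Wp w p t := Real.rpow_pos_of_pos hw0 _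

lemma continuousOn_fP (haη : a ≤ η) (hw : ContinuousOn w (Icc a η))
    (hw0 : ∀ s ∈ Icc a η, w s ≠ 0) : ContinuousOn (fP w μ η) (Icc a η) := by
  rw [← uIcc_of_le haη] at hw hw0 ⊢
  exact continuousOn_const.add (intervalIntegral.continuousOn_primitive_interval_left
    (hw.inv₀ hw0).integrableOn_uIcc)

lemma hasDerivAt_fP (hw : ContinuousOn w (Icc a η)) (hw0 : ∀ s ∈ Icc a η, w s ≠ 0)
    (ht : t ∈ Ioo a η) : HasDerivAt (fP w μ η) (-(w t)⁻¹) t := by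
  have hinv : ContinuousOn (fun s => (w s)⁻¹) (Icc a η) := hw.inv₀ hw0
  have hint : IntervalIntegrable (fun s => (w s)⁻¹) volume t η :=
    (hinv.mono (Icc_subset_Icc_left ht.1.le)).intervalIntegrable_of_Icc ht.2.le
  exact (intervalIntegral.integral_hasDerivAt_left hint
    ((hinv.mono Ioo_subset_Icc_self).stronglyMeasurableAtFilter isOpen_Ioo t ht)
    (hinv.continuousAt (Icc_mem_nhds ht.1 ht.2))).const_add μ

lemma continuousOn_Wp {s : Set ℝ} (hw : ContinuousOn w s) (hw0 : ∀ t ∈ s, w t ≠ 0) :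
    ContinuousOn (Wp w p) s :=
  hw.rpow_const fun t ht => .inl (hw0 t ht)

variable {E : Type*} [NormedAddCommGroup E] {u u' : ℝ → E}

lemma hardyFlux_fP_self (hp : 1 < p) :
    hardyFlux p (fP w μ η) u η
      = ((1 - 1 / p) ^ p) ^ ((p - 1) / p) * μ ^ (1 - p) * ‖u η‖ ^ p := by
  rw [hardyFlux, fP_self, ← Real.rpow_mul (one_sub_one_div_pos hp).le,
    mul_div_cancel₀ _ (by linarith : p ≠ 0)]
  ring

lemma continuousOn_hardy_P_integrand (hp : 0 ≤ p) (hμ : 0 < μ) (haη : a ≤ η)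
    (hw : ContinuousOn w (Icc a η)) (hw0 : ∀ t ∈ Icc a η, 0 < w t)
    (hu : ContinuousOn u (Icc a η)) :
    ContinuousOn (fun t => ‖u t‖ ^ p * Wp w p t / FP w μ η t ^ p) (Icc a η) :=
  continuousOn_hardy_integrand hp hu hw hw0 (continuousOn_fP haη hw fun t ht => (hw0 t ht).ne')
    fun _ ht => fP_pos hμ ht.2 fun s hs => hw0 s (Icc_subset_Icc_left ht.1 hs)

variable [InnerProductSpace ℝ E]

theorem hardy_P_Icc (hp : 1 < p) (hμ : 0 < μ) (haη : a ≤ η)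
    (hw : ContinuousOn w (Icc a η)) (hw0 : ∀ t ∈ Icc a η, 0 < w t)
    (hu : ContinuousOn u (Icc a η)) (hu' : ∀ t ∈ Ioo a η, HasDerivAt u (u' t) t)
    (hint : IntervalIntegrable (fun t => ‖u' t‖ ^ p * Wp w p t) volume a η) :
    (1 - 1 / p) ^ p * ∫ t in a..η, ‖u t‖ ^ p * Wp w p t / FP w μ η t ^ p
      ≤ (∫ t in a..η, ‖u' t‖ ^ p * Wp w p t)
        + ((1 - 1 / p) ^ p) ^ ((p - 1) / p) * μ ^ (1 - p) * ‖u η‖ ^ p := by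
  have hw_ne : ∀ t ∈ Icc a η, w t ≠ 0 := fun t ht => (hw0 t ht).ne'
  rw [← hardyFlux_fP_self hp]
  exact integral_hardy_le_of_hasDerivAt hp haη hw hw0 (continuousOn_fP haη hw hw_ne)
    (fun t ht => fP_pos hμ ht.2 fun s hs => hw0 s (Icc_subset_Icc_left ht.1 hs))
    (fun t ht => hasDerivAt_fP hw hw_ne ht) hu hu' hint

theorem hardy_P_of_mem_Ioc (hp : 1 < p) (hμ : 0 < μ) (hw : ContinuousOn w (Ioc a η))
    (hw0 : ∀ t ∈ Ioc a η, 0 < w t)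
    (hu : ∀ t ∈ Ioc a η, HasDerivWithinAt u (u' t) (Ioc a η) t)
    (hint : IntervalIntegrable (fun t => ‖u' t‖ ^ p * Wp w p t) volume a η)
    {x : ℝ} (hx : x ∈ Ioc a η) :
    (1 - 1 / p) ^ p * ∫ t in x..η, ‖u t‖ ^ p * Wp w p t / FP w μ η t ^ p
      ≤ (∫ t in a..η, ‖u' t‖ ^ p * Wp w p t)
        + ((1 - 1 / p) ^ p) ^ ((p - 1) / p) * μ ^ (1 - p) * ‖u η‖ ^ p := by
  have hsub : Icc x η ⊆ Ioc a η := fun t ht => ⟨hx.1.trans_le ht.1, ht.2⟩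
  have hderiv : ∀ t ∈ Ioo x η, HasDerivAt u (u' t) t := fun t ht =>
    (hu t (hsub (Ioo_subset_Icc_self ht))).hasDerivAt (Ioc_mem_nhds (hx.1.trans ht.1) ht.2)
  have hint_x : IntervalIntegrable (fun t => ‖u' t‖ ^ p * Wp w p t) volume x η :=
    hint.mono_set (uIcc_subset_uIcc_right (Icc_subset_uIcc (Ioc_subset_Icc_self hx)))
  have hmono : ∫ t in x..η, ‖u' t‖ ^ p * Wp w p t ≤ ∫ t in a..η, ‖u' t‖ ^ p * Wp w p t := by
    refine intervalIntegral.integral_mono_interval hx.1.le hx.2 le_rfl ?_ hint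
    filter_upwards [ae_restrict_mem measurableSet_Ioc] with t ht
    exact mul_nonneg (by positivity) (Wp_pos (hw0 t ht)).le
  grw [← hmono]
  exact hardy_P_Icc hp hμ hx.2 (hw.mono hsub) (fun t ht => hw0 t (hsub ht))
    (fun t ht => ((hu t (hsub ht)).mono hsub).continuousWithinAt) hderiv hint_x

end Weight

theorem hardy_P_general {E : Type*} [NormedAddCommGroup E] [InnerProductSpace ℝ E]
    {p μ a η : ℝ} (hp : 1 < p) (hμ : 0 < μ) (hη : a < η) {w : ℝ → ℝ}
    (hw : ContinuousOn w (Ioc a η)) (hw0 : ∀ t ∈ Ioc a η, 0 < w t) {u u' : ℝ → E}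
    (hu : ∀ t ∈ Ioc a η, HasDerivWithinAt u (u' t) (Ioc a η) t)
    (hint : IntervalIntegrable (fun t => ‖u' t‖ ^ p * Wp w p t) volume a η) :
    IntervalIntegrable (fun t => ‖u t‖ ^ p * Wp w p t / FP w μ η t ^ p) volume a η ∧
      (∫ t in a..η, ‖u' t‖ ^ p * Wp w p t)
          + ((1 - 1 / p) ^ p) ^ ((p - 1) / p) * μ ^ (1 - p) * ‖u η‖ ^ p
        ≥ (1 - 1 / p) ^ p * ∫ t in a..η, ‖u t‖ ^ p * Wp w p t / FP w μ η t ^ p := by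
  have hΛ : 0 < (1 - 1 / p) ^ p := Real.rpow_pos_of_pos (one_sub_one_div_pos hp) p
  have hsub {x : ℝ} (hx : x ∈ Ioc a η) : Icc x η ⊆ Ioc a η :=
    fun t ht => ⟨hx.1.trans_le ht.1, ht.2⟩
  have hnonneg : ∀ t ∈ Ioc a η, 0 ≤ ‖u t‖ ^ p * Wp w p t / FP w μ η t ^ p := by
    intro t ht
    have hW : 0 < Wp w p t := Wp_pos (hw0 t ht)
    have hF : 0 < FP w μ η t := FP_pos hμ ht.2 fun s hs => hw0 s (hsub ht hs)
    positivity
  have hint_left : ∀ x ∈ Ioc a η,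
      IntervalIntegrable (fun t => ‖u t‖ ^ p * Wp w p t / FP w μ η t ^ p) volume x η := by
    intro x hx
    have hux : ContinuousOn u (Icc x η) := fun t ht =>
      ((hu t (hsub hx ht)).mono (hsub hx)).continuousWithinAt
    exact (continuousOn_hardy_P_integrand (by linarith) hμ hx.2 (hw.mono (hsub hx))
      (fun t ht => hw0 t (hsub hx ht)) hux).intervalIntegrable_of_Icc hx.2
  have hbound := fun (x : ℝ) (hx : x ∈ Ioc a η) =>
    (le_div_iff₀' hΛ).2 (hardy_P_of_mem_Ioc hp hμ hw hw0 hu hint hx)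
  have hint_hardy := intervalIntegrable_of_forall_integral_le hη hnonneg hint_left hbound
  exact ⟨hint_hardy, (le_div_iff₀' hΛ).1 (integral_le_of_forall_integral_le hη hint_hardy hbound)⟩

/-- Weighted Hardy inequality with one-sided boundary term for
`w ∈ P(ℝ₊)` (i.e. `1/w` non-integrable near `0`). -/
theorem hardy_P (p μ η : ℝ) (hp : 1 < p) (hμ : 0 < μ) (hη : 0 < η)
    (w : ℝ → ℝ)
    (hw_pos : ∀ t, 0 < t → 0 < w t)
    (hw_smooth : ContDiffOn ℝ 1 w (Set.Ioi 0))
    (hw_lim : ∃ a : ENNReal, Filter.Tendsto (fun t => ENNReal.ofReal (w t))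
        (nhdsWithin (0:ℝ) (Set.Ioi 0)) (nhds a))
    (hwP : ∀ b, 0 < b → ¬ MeasureTheory.IntegrableOn (fun s => (w s)⁻¹) (Set.Ioo 0 b))
    (u u' : ℝ → ℝ)
    (hu : ∀ t ∈ Set.Ioc (0:ℝ) η, HasDerivWithinAt u (u' t) (Set.Ioc (0:ℝ) η) t)
    (hu'c : ContinuousOn u' (Set.Ioc (0:ℝ) η))
    (hsupp : ∃ a, 0 < a ∧ ∀ t ≤ a, u t = 0) :
    (∫ t in (0:ℝ)..η, |u' t| ^ p * Wp w p t)
      + ((1 - 1 / p) ^ p) ^ ((p - 1) / p) * μ ^ (1 - p) * |u η| ^ p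
    ≥ (1 - 1 / p) ^ p *
        ∫ t in (0:ℝ)..η, |u t| ^ p * Wp w p t / FP w μ η t ^ p := by
  have hw : ContinuousOn w (Ioc 0 η) := hw_smooth.continuousOn.mono fun t ht => ht.1
  have hw0 : ∀ t ∈ Ioc 0 η, 0 < w t := fun t ht => hw_pos t ht.1
  obtain ⟨a, ha, hua⟩ := hsupp
  have hu0 : ∀ᶠ t in nhdsWithin 0 (Ioi 0), u t = 0 :=
    nhdsWithin_le_nhds <| (eventually_le_nhds ha).mono hua
  exact (hardy_P_general hp hμ hη hw hw0 hu <| intervalIntegrable_norm_deriv_rpow_mul (by linarith)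
    hη (continuousOn_Wp hw fun t ht => (hw0 t ht).ne') hu hu'c hu0).2
end

section
/- Let 1<p<∞, μ>0, η>0 and w ∈ Q(ℝ₊). Then there exist positive numbers C and L (depending only on w, p, η, μ, not on u) such that for every u ∈ C_c^1((0,η]): ∫_0^η |u'(t)|^p W_p(t) dt ≥ Λ_p ∫_0^η |u(t)|^p W_p(t) / F_η(t)^p dt + C ∫_0^η |u(t)|^p W_p(t) / ( F_η(t)^p G_η(t)^2 ) dt + L |u(η)|^p. -/
open MeasureTheory Set

/-- `f_η(t) = ∫_0^t w(s)⁻¹ ds`  (case `w ∈ Q(ℝ₊)`). -/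
noncomputable def fQ (w : ℝ → ℝ) (t : ℝ) : ℝ := ∫ s in (0:ℝ)..t, (w s)⁻¹

/-- `F_η(t) = w(t) f_η(t)`. -/
noncomputable def FQ (w : ℝ → ℝ) (t : ℝ) : ℝ := w t * fQ w t

/-- `G_η(t) = μ + ∫_t^η F_η(s)⁻¹ ds`. -/
noncomputable def GQ (w : ℝ → ℝ) (μ η t : ℝ) : ℝ := μ + ∫ s in t..η, (FQ w s)⁻¹

/-!
If `-H' ≥ V + (p - 1) H ^ q ρ ^ (1 - q)`, where `1 / p + 1 / q = 1`, then Young's inequality gives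
`|u'| ^ p ρ ≥ V |u| ^ p + (|u| ^ p H)'` pointwise, and integrating yields a Hardy inequality with
potential `V` and a boundary term. For `ρ = W_p` the function `(q f) ^ (1 - p)` satisfies this
Riccati relation with equality for `V = Λ_p W_p / F ^ p`. Multiply it by `1 - c / G`: since
`(1 / G)' = 1 / (F G ^ 2)`, the derivative of the new factor gains a multiple of `c / G ^ 2`, the
first-order terms in `c / G` cancel, and the second-order terms lose only a multiple of
`c ^ 2 / G ^ 2`. For small `c > 0` the gain wins, and it is the remainder.
-/

theorem one_sub_rpow_le {q s : ℝ} (hq : 1 ≤ q) (hs0 : 0 ≤ s) (hs1 : s < 1) :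
    (1 - s) ^ q ≤ 1 - q * s + q ^ 2 * s ^ 2 := by
  have hpos : 0 < 1 - s := sub_pos.2 hs1
  have lower : 1 - q * s ≤ (1 - s) ^ (q - 1) := calc
    1 - q * s = 1 + q * (-s) := by ring
    _ ≤ (1 + -s) ^ q := one_add_mul_self_le_rpow_one_add (by linarith) hq
    _ = (1 - s) ^ q := by rw [← sub_eq_add_neg]
    _ ≤ (1 - s) ^ (q - 1) :=
      Real.rpow_le_rpow_of_exponent_ge hpos (by linarith) (by linarith)
  have tangent : (1 - s) ^ q + q * s * (1 - s) ^ (q - 1) ≤ 1 := by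
    have bernoulli : 1 + q * (s / (1 - s)) ≤ ((1 - s) ^ q)⁻¹ := by
      have hinv : 1 + s / (1 - s) = (1 - s)⁻¹ := by field_simp; ring
      rw [← Real.inv_rpow hpos.le, ← hinv]
      exact one_add_mul_self_le_rpow_one_add (by linarith [div_nonneg hs0 hpos.le]) hq
    calc (1 - s) ^ q + q * s * (1 - s) ^ (q - 1)
        = (1 - s) ^ q * (1 + q * (s / (1 - s))) := by
          rw [Real.rpow_sub_one hpos.ne']; ring
      _ ≤ (1 - s) ^ q * ((1 - s) ^ q)⁻¹ := by gcongr
      _ = 1 := mul_inv_cancel₀ (by positivity)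
  have hqs : 0 ≤ q * s := by positivity
  nlinarith [mul_le_mul_of_nonneg_left lower hqs]

theorem one_add_sub_one_mul_rpow_le {p q s : ℝ} (hpq : p.HolderConjugate q) (hs0 : 0 ≤ s)
    (hs1 : s < 1) : 1 + (p - 1) * (1 - s) ^ q ≤ p * (1 - s) + p * q * s ^ 2 := by
  have h := mul_le_mul_of_nonneg_left (one_sub_rpow_le hpq.symm.lt.le hs0 hs1) hpq.sub_one_pos.le
  linear_combination h + (q * s ^ 2 - s) * hpq.sub_one_mul_conj

theorem abs_rpow_sub_two_mul_mul_le (p x v : ℝ) :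
    |x| ^ (p - 2) * x * v ≤ |x| ^ (p - 1) * |v| := by
  rcases eq_or_ne x 0 with rfl | hx
  · simp only [mul_zero, zero_mul]
    positivity
  calc |x| ^ (p - 2) * x * v ≤ |x| ^ (p - 2) * |x| * |v| := by
        rw [mul_assoc, mul_assoc, ← abs_mul]
        gcongr
        exact le_abs_self _
    _ = |x| ^ (p - 1) * |v| := by
        rw [← Real.rpow_add_one (abs_pos.2 hx).ne']
        ring_nf

theorem mul_mul_le_weighted_young {p q x v h ρ : ℝ} (hpq : p.HolderConjugate q) (hx : 0 ≤ x)
    (hv : 0 ≤ v) (hh : 0 ≤ h) (hρ : 0 < ρ) :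
    p * (x ^ (p - 1) * v * h) ≤ v ^ p * ρ + (p - 1) * (x ^ p * h ^ q * ρ ^ (1 - q)) := by
  have hleft : (v * ρ ^ p⁻¹) ^ p = v ^ p * ρ := by
    rw [Real.mul_rpow hv (by positivity), Real.rpow_inv_rpow hρ.le hpq.ne_zero]
  have hright : (x ^ (p - 1) * h * ρ ^ (-p⁻¹)) ^ q = x ^ p * h ^ q * ρ ^ (1 - q) := by
    have hexp : -p⁻¹ * q = 1 - q := by linear_combination -hpq.symm.div_conj_eq_sub_one
    rw [Real.mul_rpow (by positivity) (by positivity), Real.mul_rpow (by positivity) hh,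
      ← Real.rpow_mul hx, ← Real.rpow_mul hρ.le, hpq.sub_one_mul_conj, hexp]
  have hcancel : ρ ^ p⁻¹ * ρ ^ (-p⁻¹) = 1 := by
    rw [← Real.rpow_add hρ, add_neg_cancel, Real.rpow_zero]
  calc p * (x ^ (p - 1) * v * h)
      = p * ((v * ρ ^ p⁻¹) * (x ^ (p - 1) * h * ρ ^ (-p⁻¹))) := by
        linear_combination -(p * (x ^ (p - 1) * v * h)) * hcancel
    _ ≤ p * ((v * ρ ^ p⁻¹) ^ p / p + (x ^ (p - 1) * h * ρ ^ (-p⁻¹)) ^ q / q) := by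
        have hp_nonneg := hpq.nonneg
        gcongr
        exact Real.young_inequality_of_nonneg (by positivity) (by positivity) hpq
    _ = v ^ p * ρ + (p - 1) * (x ^ p * h ^ q * ρ ^ (1 - q)) := by
        rw [hleft, hright, ← hpq.div_conj_eq_sub_one]
        have hp_ne_zero := hpq.ne_zero
        field_simp

theorem integral_abs_rpow_mul_add_le_of_riccati {p q a b : ℝ} {u u' H H' ρ V : ℝ → ℝ}
    (hpq : p.HolderConjugate q) (hab : a ≤ b)
    (hρ : ∀ t ∈ Ioo a b, 0 < ρ t) (hH_nonneg : ∀ t ∈ Ioo a b, 0 ≤ H t)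
    (hu : ∀ t ∈ Ioo a b, HasDerivAt u (u' t) t) (hH : ∀ t ∈ Ioo a b, HasDerivAt H (H' t) t)
    (hcont : ContinuousOn (fun t => |u t| ^ p * H t) (Icc a b))
    (hriccati : ∀ t ∈ Ioo a b, V t + (p - 1) * (H t ^ q * ρ t ^ (1 - q)) ≤ -H' t)
    (hu'_int : IntervalIntegrable (fun t => |u' t| ^ p * ρ t) volume a b)
    (hV_int : IntervalIntegrable (fun t => |u t| ^ p * V t) volume a b) :
    (∫ t in a..b, |u t| ^ p * V t) + (|u b| ^ p * H b - |u a| ^ p * H a) ≤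
      ∫ t in a..b, |u' t| ^ p * ρ t := by
  have hderiv (t) (ht : t ∈ Ioo a b) : HasDerivAt (fun t => |u t| ^ p * H t)
      (p * |u t| ^ (p - 2) * u t * u' t * H t + |u t| ^ p * H' t) t :=
    ((hasDerivAt_abs_rpow (u t) hpq.lt).comp t (hu t ht)).mul (hH t ht)
  have hpointwise (t) (ht : t ∈ Ioo a b) :
      p * |u t| ^ (p - 2) * u t * u' t * H t + |u t| ^ p * H' t ≤
        |u' t| ^ p * ρ t - |u t| ^ p * V t := by
    have hyoung := mul_mul_le_weighted_young hpq (abs_nonneg (u t)) (abs_nonneg (u' t))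
      (hH_nonneg t ht) (hρ t ht)
    have hsign : p * (|u t| ^ (p - 2) * u t * u' t * H t) ≤
        p * (|u t| ^ (p - 1) * |u' t| * H t) :=
      mul_le_mul_of_nonneg_left (mul_le_mul_of_nonneg_right
        (abs_rpow_sub_two_mul_mul_le p (u t) (u' t)) (hH_nonneg t ht)) hpq.nonneg
    have hmul := mul_le_mul_of_nonneg_left (hriccati t ht) (show 0 ≤ |u t| ^ p by positivity)
    linarith
  have hftc := intervalIntegral.sub_le_integral_of_hasDeriv_right_of_le hab hcont
    (fun t ht => (hderiv t ht).hasDerivWithinAt)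
    ((intervalIntegrable_iff_integrableOn_Icc_of_le hab).1 (hu'_int.sub hV_int)) hpointwise
  rw [intervalIntegral.integral_sub hu'_int hV_int] at hftc
  linarith

section TestFunctions

open Filter Topology

theorem continuousOn_Icc_update_of_tendsto {α β : Type*} [LinearOrder α] [TopologicalSpace α]
    [T1Space α] [TopologicalSpace β] {h : α → β} {a b : α} {y : β}
    (hc : ContinuousOn h (Ioc a b)) (hy : Tendsto h (𝓝[>] a) (𝓝 y)) :
    ContinuousOn (Function.update h a y) (Icc a b) := by
  rw [continuousOn_update_iff, Icc_sdiff_left]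
  exact ⟨hc, fun _ => hy.mono_left (nhdsWithin_mono a Ioc_subset_Ioi_self)⟩

theorem intervalIntegrable_of_continuousOn_Ioc_of_tendsto {E : Type*} [NormedAddCommGroup E]
    {h : ℝ → E} {a b : ℝ} {y : E} (hab : a ≤ b) (hc : ContinuousOn h (Ioc a b))
    (hy : Tendsto h (𝓝[>] a) (𝓝 y)) :
    IntervalIntegrable h volume a b := by
  refine ((continuousOn_Icc_update_of_tendsto hc hy).intervalIntegrable_of_Icc hab).congr
    fun t ht => ?_
  rw [uIoc_of_le hab] at ht
  exact Function.update_of_ne ht.1.ne' _ _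

theorem tendsto_abs_rpow_mul_of_eventuallyEq_zero {α : Type*} {v ρ : α → ℝ} {p : ℝ}
    {l : Filter α} (hp : p ≠ 0) (hv : v =ᶠ[l] 0) : Tendsto (fun t => |v t| ^ p * ρ t) l (𝓝 0) := by
  refine tendsto_const_nhds.congr' (hv.mono fun t ht => ?_)
  simp only [ht, Pi.zero_apply, abs_zero, Real.zero_rpow hp, zero_mul]

/-- `u` belongs to `C_c¹((0, η])` and `u'` is its derivative. Vanishing near `0` is encoded as
vanishing on a half-line `(-∞, a]` with `a > 0`. -/
structure IsTestFunctionOn (u u' : ℝ → ℝ) (η : ℝ) : Prop where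
  hasDerivWithinAt : ∀ t ∈ Ioc 0 η, HasDerivWithinAt u (u' t) (Ioc 0 η) t
  continuousOn_deriv : ContinuousOn u' (Ioc 0 η)
  eq_zero : ∃ a, 0 < a ∧ ∀ t ≤ a, u t = 0

namespace IsTestFunctionOn

variable {u u' ρ : ℝ → ℝ} {η p : ℝ}

theorem continuousOn (h : IsTestFunctionOn u u' η) : ContinuousOn u (Ioc 0 η) := fun t ht =>
  (h.hasDerivWithinAt t ht).continuousWithinAt

theorem hasDerivAt (h : IsTestFunctionOn u u' η) {t : ℝ} (ht : t ∈ Ioo 0 η) :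
    HasDerivAt u (u' t) t :=
  (h.hasDerivWithinAt t (Ioo_subset_Ioc_self ht)).hasDerivAt (Ioc_mem_nhds ht.1 ht.2)

theorem eventuallyEq_zero (h : IsTestFunctionOn u u' η) : u =ᶠ[𝓝 0] 0 := by
  obtain ⟨a, ha, hu⟩ := h.eq_zero
  exact eventually_of_mem (Iic_mem_nhds ha) hu

theorem deriv_eventuallyEq_zero (h : IsTestFunctionOn u u' η) (hη : 0 < η) :
    u' =ᶠ[𝓝[>] 0] 0 := by
  filter_upwards [nhdsWithin_le_nhds h.eventuallyEq_zero.eventuallyEq_nhds, Ioo_mem_nhdsGT hη]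
    with t hu ht
  exact (h.hasDerivAt ht).unique (hu.hasDerivAt_iff.2 (hasDerivAt_const t 0))

theorem continuousOn_Icc_abs_rpow_mul (h : IsTestFunctionOn u u' η) (hp : 0 < p)
    (hρ : ContinuousOn ρ (Ioc 0 η)) : ContinuousOn (fun t => |u t| ^ p * ρ t) (Icc 0 η) := by
  have hzero : |u 0| ^ p * ρ 0 = 0 := by
    rw [h.eventuallyEq_zero.eq_of_nhds, Pi.zero_apply, abs_zero, Real.zero_rpow hp.ne', zero_mul]
  have hupdate := continuousOn_Icc_update_of_tendsto
    ((h.continuousOn.abs.rpow_const fun _ _ => Or.inr hp.le).mul hρ)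
    (tendsto_abs_rpow_mul_of_eventuallyEq_zero hp.ne'
      (h.eventuallyEq_zero.filter_mono nhdsWithin_le_nhds))
  rwa [Function.update_eq_self_iff.2 hzero.symm] at hupdate

theorem intervalIntegrable_abs_rpow_mul (h : IsTestFunctionOn u u' η) (hη : 0 ≤ η) (hp : 0 < p)
    (hρ : ContinuousOn ρ (Ioc 0 η)) :
    IntervalIntegrable (fun t => |u t| ^ p * ρ t) volume 0 η :=
  (h.continuousOn_Icc_abs_rpow_mul hp hρ).intervalIntegrable_of_Icc hη

theorem intervalIntegrable_abs_deriv_rpow_mul (h : IsTestFunctionOn u u' η) (hη : 0 < η)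
    (hp : 0 < p) (hρ : ContinuousOn ρ (Ioc 0 η)) :
    IntervalIntegrable (fun t => |u' t| ^ p * ρ t) volume 0 η :=
  intervalIntegrable_of_continuousOn_Ioc_of_tendsto hη.le
    ((h.continuousOn_deriv.abs.rpow_const fun _ _ => Or.inr hp.le).mul hρ)
    (tendsto_abs_rpow_mul_of_eventuallyEq_zero hp.ne' (h.deriv_eventuallyEq_zero hη))

end IsTestFunctionOn

end TestFunctions

/-- The conditions defining the class `Q(ℝ₊)` of weights, restricted to `(0, η]`, with continuity
in place of continuous differentiability and without a limit at `0`. -/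
structure IsQWeightOn (w : ℝ → ℝ) (η : ℝ) : Prop where
  pos : ∀ t ∈ Ioc 0 η, 0 < w t
  continuousOn : ContinuousOn w (Ioc 0 η)
  intervalIntegrable_inv : IntervalIntegrable (fun s => (w s)⁻¹) volume 0 η

namespace IsQWeightOn

variable {w : ℝ → ℝ} {μ η p t : ℝ}

theorem mono (hw : IsQWeightOn w η) (ht : t ∈ Ioc 0 η) : IsQWeightOn w t where
  pos s hs := hw.pos s (Ioc_subset_Ioc_right ht.2 hs)
  continuousOn := hw.continuousOn.mono (Ioc_subset_Ioc_right ht.2)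
  intervalIntegrable_inv := hw.intervalIntegrable_inv.mono_set
    (uIcc_subset_uIcc_left (mem_uIcc_of_le ht.1.le ht.2))

theorem fQ_pos (hw : IsQWeightOn w η) (ht : t ∈ Ioc 0 η) : 0 < fQ w t :=
  intervalIntegral.intervalIntegral_pos_of_pos_on (hw.mono ht).intervalIntegrable_inv
    (fun s hs => inv_pos.2 (hw.pos s ⟨hs.1, hs.2.le.trans ht.2⟩)) ht.1

theorem hasDerivAt_fQ (hw : IsQWeightOn w η) (ht : t ∈ Ioo 0 η) :
    HasDerivAt (fQ w) (w t)⁻¹ t := by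
  have hinv : ContinuousOn (fun s => (w s)⁻¹) (Ioo 0 η) :=
    (hw.continuousOn.mono Ioo_subset_Ioc_self).inv₀ fun s hs =>
      (hw.pos s (Ioo_subset_Ioc_self hs)).ne'
  exact intervalIntegral.integral_hasDerivAt_right
    (hw.mono (Ioo_subset_Ioc_self ht)).intervalIntegrable_inv
    (hinv.stronglyMeasurableAtFilter isOpen_Ioo t ht) (hinv.continuousAt (Ioo_mem_nhds ht.1 ht.2))

theorem continuousOn_fQ (hw : IsQWeightOn w η) : ContinuousOn (fQ w) (Ioc 0 η) :=
  (intervalIntegral.continuousOn_primitive_interval' hw.intervalIntegrable_inv left_mem_uIcc).mono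
    (Ioc_subset_Icc_self.trans Icc_subset_uIcc)

theorem FQ_pos (hw : IsQWeightOn w η) (ht : t ∈ Ioc 0 η) : 0 < FQ w t :=
  mul_pos (hw.pos t ht) (hw.fQ_pos ht)

theorem continuousOn_FQ (hw : IsQWeightOn w η) : ContinuousOn (FQ w) (Ioc 0 η) :=
  hw.continuousOn.mul hw.continuousOn_fQ

theorem continuousOn_inv_FQ (hw : IsQWeightOn w η) :
    ContinuousOn (fun s => (FQ w s)⁻¹) (Ioc 0 η) :=
  hw.continuousOn_FQ.inv₀ fun _ hs => (hw.FQ_pos hs).ne'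

theorem continuousOn_Wp (hw : IsQWeightOn w η) : ContinuousOn (Wp w p) (Ioc 0 η) :=
  hw.continuousOn.rpow_const fun t ht => Or.inl (hw.pos t ht).ne'

theorem le_GQ (hw : IsQWeightOn w η) (ht : t ∈ Ioc 0 η) : μ ≤ GQ w μ η t :=
  le_add_of_nonneg_right <| intervalIntegral.integral_nonneg ht.2 fun _ hs =>
    (inv_pos.2 (hw.FQ_pos ⟨ht.1.trans_le hs.1, hs.2⟩)).le

theorem GQ_pos (hw : IsQWeightOn w η) (hμ : 0 < μ) (ht : t ∈ Ioc 0 η) : 0 < GQ w μ η t :=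
  hμ.trans_le (hw.le_GQ ht)

theorem hasDerivAt_GQ (hw : IsQWeightOn w η) (ht : t ∈ Ioo 0 η) :
    HasDerivAt (GQ w μ η) (-(FQ w t)⁻¹) t := by
  have hinv := hw.continuousOn_inv_FQ
  have hinv' := hinv.mono Ioo_subset_Ioc_self
  exact (intervalIntegral.integral_hasDerivAt_left
    ((hinv.mono fun s hs => ⟨ht.1.trans_le hs.1, hs.2⟩).intervalIntegrable_of_Icc ht.2.le)
    (hinv'.stronglyMeasurableAtFilter isOpen_Ioo t ht)
    (hinv'.continuousAt (Ioo_mem_nhds ht.1 ht.2))).const_add μ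

theorem continuousOn_GQ (hw : IsQWeightOn w η) : ContinuousOn (GQ w μ η) (Ioc 0 η) := by
  intro t ht
  obtain ⟨a, ha, hat⟩ := exists_between ht.1
  have haη : a ≤ η := hat.le.trans ht.2
  have hinv : IntegrableOn (fun s => (FQ w s)⁻¹) (uIcc a η) := by
    rw [uIcc_of_le haη]
    exact (hw.continuousOn_inv_FQ.mono fun s hs => ⟨ha.trans_le hs.1, hs.2⟩).integrableOn_Icc
  have hcont : ContinuousOn (GQ w μ η) (Icc a η) := by
    rw [← uIcc_of_le haη]
    exact continuousOn_const.add (intervalIntegral.continuousOn_primitive_interval_left hinv)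
  refine (hcont t ⟨hat.le, ht.2⟩).mono_of_mem_nhdsWithin ?_
  filter_upwards [mem_nhdsWithin_of_mem_nhds (Ioi_mem_nhds hat), self_mem_nhdsWithin] with s has hs
  exact ⟨has.le, hs.2⟩

theorem Wp_div_FQ_rpow (hw : IsQWeightOn w η) (ht : t ∈ Ioc 0 η) :
    Wp w p t / FQ w t ^ p = (w t)⁻¹ * fQ w t ^ (-p) := by
  have hwt := hw.pos t ht
  have hft := hw.fQ_pos ht
  rw [Wp, FQ, Real.mul_rpow hwt.le hft.le, Real.rpow_sub_one hwt.ne', Real.rpow_neg hft.le]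
  field_simp

theorem continuousOn_Wp_div_FQ_rpow (hw : IsQWeightOn w η) :
    ContinuousOn (fun t => Wp w p t / FQ w t ^ p) (Ioc 0 η) :=
  hw.continuousOn_Wp.div
    (hw.continuousOn_FQ.rpow_const fun _ ht => Or.inl (hw.FQ_pos ht).ne')
    fun _ ht => (Real.rpow_pos_of_pos (hw.FQ_pos ht) p).ne'

theorem continuousOn_Wp_div_FQ_rpow_mul_GQ_sq (hw : IsQWeightOn w η) (hμ : 0 < μ) :
    ContinuousOn (fun t => Wp w p t / (FQ w t ^ p * GQ w μ η t ^ 2)) (Ioc 0 η) := by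
  simp only [← div_div]
  exact hw.continuousOn_Wp_div_FQ_rpow.div (hw.continuousOn_GQ.pow 2)
    fun _ ht => (pow_pos (hw.GQ_pos hμ ht) 2).ne'

end IsQWeightOn

/-- The multiplier `H = (q f) ^ (1 - p) (1 - c / G)` to which the Riccati method is applied:
`(q f) ^ (1 - p)` belongs to the sharp inequality without remainder, and `c` is the size of the
perturbation. -/
noncomputable def hardyMultiplier (w : ℝ → ℝ) (μ η p q c t : ℝ) : ℝ :=
  (q * fQ w t) ^ (1 - p) * (1 - c / GQ w μ η t)

/-- The potential `Λ W_p / F ^ p + C W_p / (F ^ p G ^ 2)` of the improved inequality. -/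
noncomputable def hardyPotential (w : ℝ → ℝ) (μ η p Λ C t : ℝ) : ℝ :=
  Λ * (Wp w p t / FQ w t ^ p) + C * (Wp w p t / (FQ w t ^ p * GQ w μ η t ^ 2))

namespace IsQWeightOn

variable {w : ℝ → ℝ} {μ η p q c t : ℝ}

theorem continuousOn_hardyMultiplier (hw : IsQWeightOn w η) (hμ : 0 < μ) (hq : 0 < q) :
    ContinuousOn (hardyMultiplier w μ η p q c) (Ioc 0 η) :=
  ((continuousOn_const.mul hw.continuousOn_fQ).rpow_const fun _ ht =>
    Or.inl (mul_pos hq (hw.fQ_pos ht)).ne').mul <|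
  continuousOn_const.sub <| continuousOn_const.div hw.continuousOn_GQ fun _ ht =>
    (hw.GQ_pos hμ ht).ne'

theorem div_GQ_lt_one (hw : IsQWeightOn w η) (hμ : 0 < μ) (hcμ : c < μ) (ht : t ∈ Ioc 0 η) :
    c / GQ w μ η t < 1 :=
  (div_lt_one (hw.GQ_pos hμ ht)).2 (hcμ.trans_le (hw.le_GQ ht))

theorem hardyMultiplier_pos (hw : IsQWeightOn w η) (hμ : 0 < μ) (hq : 0 < q) (hcμ : c < μ)
    (ht : t ∈ Ioc 0 η) : 0 < hardyMultiplier w μ η p q c t :=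
  mul_pos (Real.rpow_pos_of_pos (mul_pos hq (hw.fQ_pos ht)) _)
    (sub_pos.2 (hw.div_GQ_lt_one hμ hcμ ht))

theorem hardyMultiplier_rpow_mul_Wp_rpow (hw : IsQWeightOn w η) (hpq : p.HolderConjugate q)
    (hμ : 0 < μ) (hcμ : c < μ) (ht : t ∈ Ioc 0 η) :
    hardyMultiplier w μ η p q c t ^ q * Wp w p t ^ (1 - q) =
      (w t)⁻¹ * (q * fQ w t) ^ (-p) * (1 - c / GQ w μ η t) ^ q := by
  have hf : 0 ≤ q * fQ w t := (mul_pos hpq.symm.pos (hw.fQ_pos ht)).le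
  have hs : 0 ≤ 1 - c / GQ w μ η t := (sub_pos.2 (hw.div_GQ_lt_one hμ hcμ ht)).le
  have hexp_f : (1 - p) * q = -p := by linear_combination -hpq.sub_one_mul_conj
  have hexp_w : (p - 1) * (1 - q) = -1 := by linear_combination -hpq.sub_one_mul_conj
  rw [hardyMultiplier, Wp, Real.mul_rpow (by positivity) hs, ← Real.rpow_mul hf,
    ← Real.rpow_mul (hw.pos t ht).le, hexp_f, hexp_w, Real.rpow_neg_one]
  ring

theorem hasDerivAt_hardyMultiplier (hw : IsQWeightOn w η) (hpq : p.HolderConjugate q)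
    (hμ : 0 < μ) (ht : t ∈ Ioo 0 η) :
    HasDerivAt (hardyMultiplier w μ η p q c)
      (-((w t)⁻¹ * (q * fQ w t) ^ (-p) *
        (p * (1 - c / GQ w μ η t) + q * c / GQ w μ η t ^ 2))) t := by
  have ht' := Ioo_subset_Ioc_self ht
  have hwt := hw.pos t ht'
  have hf := hw.fQ_pos ht'
  have hqf : 0 < q * fQ w t := mul_pos hpq.symm.pos hf
  have hG := hw.GQ_pos hμ ht'
  have hfactor := ((hw.hasDerivAt_fQ ht).const_mul q).rpow_const (p := 1 - p) (Or.inl hqf.ne')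
  have hperturb := ((hasDerivAt_const t c).fun_div (hw.hasDerivAt_GQ ht) hG.ne').const_sub 1
  refine (hfactor.mul hperturb).congr_deriv ?_
  have hexp : (q * fQ w t) ^ (1 - p) = (q * fQ w t) ^ (-p) * (q * fQ w t) := by
    rw [← Real.rpow_add_one hqf.ne', neg_add_eq_sub]
  rw [sub_sub_cancel_left, hexp, FQ]
  field_simp
  linear_combination (c - GQ w μ η t) * GQ w μ η t * hpq.sub_one_mul_conj

theorem hardyPotential_add_le (hw : IsQWeightOn w η) (hpq : p.HolderConjugate q) (hμ : 0 < μ)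
    (hc : 0 ≤ c) (hcμ : c < μ) (ht : t ∈ Ioc 0 η) :
    hardyPotential w μ η p (q⁻¹ ^ p) (q⁻¹ ^ p * (q * c * (1 - p * c))) t +
        (p - 1) * (hardyMultiplier w μ η p q c t ^ q * Wp w p t ^ (1 - q)) ≤
      (w t)⁻¹ * (q * fQ w t) ^ (-p) * (p * (1 - c / GQ w μ η t) + q * c / GQ w μ η t ^ 2) := by
  have hG := hw.GQ_pos hμ ht
  have hw_nonneg := (hw.pos t ht).le
  have hf_nonneg := (hw.fQ_pos ht).le
  have hq_nonneg := hpq.symm.nonneg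
  have hpotential : hardyPotential w μ η p (q⁻¹ ^ p) (q⁻¹ ^ p * (q * c * (1 - p * c))) t =
      (w t)⁻¹ * (q * fQ w t) ^ (-p) * (1 + q * c * (1 - p * c) / GQ w μ η t ^ 2) := by
    rw [hardyPotential, ← div_div, hw.Wp_div_FQ_rpow ht, Real.mul_rpow hq_nonneg hf_nonneg,
      Real.inv_rpow hq_nonneg, Real.rpow_neg hq_nonneg]
    ring
  have hscalar := one_add_sub_one_mul_rpow_le hpq (div_nonneg hc hG.le)
    (hw.div_GQ_lt_one hμ hcμ ht)
  rw [hpotential, hw.hardyMultiplier_rpow_mul_Wp_rpow hpq hμ hcμ ht]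
  calc _ = (w t)⁻¹ * (q * fQ w t) ^ (-p) *
        (1 + (p - 1) * (1 - c / GQ w μ η t) ^ q + q * c * (1 - p * c) / GQ w μ η t ^ 2) := by ring
    _ ≤ (w t)⁻¹ * (q * fQ w t) ^ (-p) * (p * (1 - c / GQ w μ η t) + p * q * (c / GQ w μ η t) ^ 2
          + q * c * (1 - p * c) / GQ w μ η t ^ 2) := by gcongr
    _ = _ := by ring

theorem continuousOn_hardyPotential (hw : IsQWeightOn w η) (hμ : 0 < μ) {Λ C : ℝ} :
    ContinuousOn (hardyPotential w μ η p Λ C) (Ioc 0 η) :=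
  (continuousOn_const.mul hw.continuousOn_Wp_div_FQ_rpow).add
    (continuousOn_const.mul (hw.continuousOn_Wp_div_FQ_rpow_mul_GQ_sq hμ))

end IsQWeightOn

section Hardy

variable {w u u' : ℝ → ℝ} {μ η p q c : ℝ}

theorem integral_abs_rpow_mul_hardyPotential (hw : IsQWeightOn w η)
    (hu : IsTestFunctionOn u u' η) (hp : 0 < p) (hμ : 0 < μ) (hη : 0 ≤ η) (Λ C : ℝ) :
    ∫ t in (0 : ℝ)..η, |u t| ^ p * hardyPotential w μ η p Λ C t =
      Λ * (∫ t in (0 : ℝ)..η, |u t| ^ p * Wp w p t / FQ w t ^ p) +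
        C * ∫ t in (0 : ℝ)..η, |u t| ^ p * Wp w p t / (FQ w t ^ p * GQ w μ η t ^ 2) := by
  have hint := hu.intervalIntegrable_abs_rpow_mul hη hp
    (hw.continuousOn_Wp_div_FQ_rpow (p := p))
  have hint' := hu.intervalIntegrable_abs_rpow_mul hη hp
    (hw.continuousOn_Wp_div_FQ_rpow_mul_GQ_sq (p := p) hμ)
  simp only [hardyPotential, mul_add, mul_left_comm (|u _| ^ p), mul_div_assoc]
  rw [intervalIntegral.integral_add (hint.const_mul Λ) (hint'.const_mul C),
    intervalIntegral.integral_const_mul, intervalIntegral.integral_const_mul]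

theorem integral_hardyPotential_add_le (hw : IsQWeightOn w η) (hu : IsTestFunctionOn u u' η)
    (hpq : p.HolderConjugate q) (hμ : 0 < μ) (hη : 0 < η) (hc : 0 ≤ c) (hcμ : c < μ) :
    (∫ t in (0 : ℝ)..η, |u t| ^ p *
        hardyPotential w μ η p (q⁻¹ ^ p) (q⁻¹ ^ p * (q * c * (1 - p * c))) t) +
      hardyMultiplier w μ η p q c η * |u η| ^ p ≤
    ∫ t in (0 : ℝ)..η, |u' t| ^ p * Wp w p t := by
  have hriccati := integral_abs_rpow_mul_add_le_of_riccati hpq hη.le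
    (fun t ht => Real.rpow_pos_of_pos (hw.pos t (Ioo_subset_Ioc_self ht)) (p - 1))
    (fun t ht => (hw.hardyMultiplier_pos hμ hpq.symm.pos hcμ (Ioo_subset_Ioc_self ht)).le)
    (fun t => hu.hasDerivAt) (fun t => hw.hasDerivAt_hardyMultiplier hpq hμ)
    (hu.continuousOn_Icc_abs_rpow_mul hpq.pos
      (hw.continuousOn_hardyMultiplier hμ hpq.symm.pos))
    (fun t ht => (hw.hardyPotential_add_le hpq hμ hc hcμ (Ioo_subset_Ioc_self ht)).trans_eq
      (neg_neg _).symm)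
    (hu.intervalIntegrable_abs_deriv_rpow_mul hη hpq.pos hw.continuousOn_Wp)
    (hu.intervalIntegrable_abs_rpow_mul hη.le hpq.pos (hw.continuousOn_hardyPotential hμ))
  have hu_zero : u 0 = 0 := hu.eventuallyEq_zero.eq_of_nhds
  rwa [hu_zero, abs_zero, Real.zero_rpow hpq.ne_zero, zero_mul, sub_zero,
    mul_comm (|u η| ^ p)] at hriccati

theorem hardy_Q_remainder_general (hp : 1 < p) (hμ : 0 < μ) (hη : 0 < η)
    (hw : IsQWeightOn w η) :
    ∃ C L : ℝ, 0 < C ∧ 0 < L ∧ ∀ u u' : ℝ → ℝ, IsTestFunctionOn u u' η →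
      (∫ t in (0 : ℝ)..η, |u' t| ^ p * Wp w p t) ≥
        (1 - 1 / p) ^ p * (∫ t in (0 : ℝ)..η, |u t| ^ p * Wp w p t / FQ w t ^ p)
          + C * (∫ t in (0 : ℝ)..η, |u t| ^ p * Wp w p t / (FQ w t ^ p * GQ w μ η t ^ 2))
          + L * |u η| ^ p := by
  have hpq := Real.HolderConjugate.conjExponent hp
  have hq := hpq.symm.pos
  obtain ⟨c, hc, hc_lt⟩ := exists_between (lt_min hμ hpq.inv_pos)
  obtain ⟨hcμ, hcp⟩ := lt_min_iff.1 hc_lt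
  have hpc : 0 < 1 - p * c := by
    rwa [sub_pos, ← lt_inv_mul_iff₀ hpq.pos, mul_one]
  refine ⟨p.conjExponent⁻¹ ^ p * (p.conjExponent * c * (1 - p * c)),
    hardyMultiplier w μ η p p.conjExponent c η, by positivity,
    hw.hardyMultiplier_pos hμ hq hcμ (right_mem_Ioc.2 hη), fun u u' hu => ?_⟩
  rw [one_div, hpq.one_sub_inv, ← integral_abs_rpow_mul_hardyPotential hw hu hpq.pos hμ hη.le]
  exact integral_hardyPotential_add_le hw hu hpq hμ hη hc.le hcμ

end Hardy

/-- Weighted Hardy inequality with sharp remainder for `w ∈ Q(ℝ₊)`: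
there are positive constants `C, L` (independent of `u`) such that the Hardy
inequality holds with the extra remainder term `C ∫ |u|^p W_p/(F_η^p G_η^2)`
and the boundary term `+ L |u(η)|^p`. -/
theorem hardy_Q_remainder (p μ η : ℝ) (hp : 1 < p) (hμ : 0 < μ) (hη : 0 < η)
    (w : ℝ → ℝ)
    (hw_pos : ∀ t, 0 < t → 0 < w t)
    (hw_smooth : ContDiffOn ℝ 1 w (Set.Ioi 0))
    (hw_lim : ∃ a : ENNReal, Filter.Tendsto (fun t => ENNReal.ofReal (w t))
        (nhdsWithin (0:ℝ) (Set.Ioi 0)) (nhds a))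
    (hwQ : ∀ b, 0 < b → MeasureTheory.IntegrableOn (fun s => (w s)⁻¹) (Set.Ioo 0 b)) :
    ∃ C L : ℝ, 0 < C ∧ 0 < L ∧
      ∀ u u' : ℝ → ℝ,
        (∀ t ∈ Set.Ioc (0:ℝ) η, HasDerivWithinAt u (u' t) (Set.Ioc (0:ℝ) η) t) →
        ContinuousOn u' (Set.Ioc (0:ℝ) η) →
        (∃ a, 0 < a ∧ ∀ t ≤ a, u t = 0) →
        (∫ t in (0:ℝ)..η, |u' t| ^ p * Wp w p t)
        ≥ (1 - 1 / p) ^ p *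
            (∫ t in (0:ℝ)..η, |u t| ^ p * Wp w p t / FQ w t ^ p)
          + C * (∫ t in (0:ℝ)..η, |u t| ^ p * Wp w p t / (FQ w t ^ p * GQ w μ η t ^ 2))
          + L * |u η| ^ p := by
  obtain ⟨C, L, hC, hL, hardy⟩ := hardy_Q_remainder_general hp hμ hη
    ⟨fun t ht => hw_pos t ht.1, hw_smooth.continuousOn.mono Ioc_subset_Ioi_self,
      (intervalIntegrable_iff_integrableOn_Ioo_of_le hη.le).2 (hwQ η hη)⟩
  exact ⟨C, L, hC, hL, fun u u' hu hu' hu_zero => hardy u u' ⟨hu, hu', hu_zero⟩⟩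
end
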